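/- For all integers l and M with 1 ≤ l ≤ M, one has M!·(M+1)!/((M−l)!·(M+l+1)!) ≤ M/(M+2); in particular this quantity is strictly less than 1. -/

import Mathlib

theorem lambda_aux (M l : ℕ) (h1 : 1 ≤ l) : l ≤ M →
    M.factorial * (M + 1).factorial * (M + 2) ≤
      M * ((M - l).factorial * (M + l + 1).factorial) := by
  induction l, h1 using Nat.le_induction with
  | base =>
    intro h
    obtain ⟨k, rfl⟩ : ∃ k, M = k + 1 := ⟨M - 1, by omega⟩
    apply le_of_eq
    rw [Nat.add_sub_cancel, Nat.factorial_succ (k + 1 + 1), Nat.factorial_succ k]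
    ring
  | succ n hn ih =>
    intro h
    refine (ih (by omega)).trans (Nat.mul_le_mul_left _ ?_)
    obtain ⟨k, rfl⟩ : ∃ k, M = k + n + 1 := ⟨M - n - 1, by omega⟩
    have e1 : k + n + 1 - n = k + 1 := by omega
    have e2 : k + n + 1 - (n + 1) = k := by omega
    have e3 : k + n + 1 + (n + 1) + 1 = (k + n + 1 + n + 1) + 1 := by omega
    rw [e1, e2, e3, Nat.factorial_succ k, Nat.factorial_succ (k + n + 1 + n + 1)]
    calc (k + 1) * k.factorial * (k + n + 1 + n + 1).factorial
        = k.factorial * ((k + 1) * (k + n + 1 + n + 1).factorial) := by ring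
      _ ≤ _ := by
        apply Nat.mul_le_mul_left
        apply Nat.mul_le_mul_right
        omega

/-- For `1 ≤ l ≤ M`, `M!(M+1)!/((M−l)!(M+l+1)!) ≤ M/(M+2) < 1`. -/
theorem lambda_coefficient_bound (l M : ℕ) (h1 : 1 ≤ l) (h2 : l ≤ M) :
    ((M.factorial : ℝ) * (M + 1).factorial /
        ((M - l).factorial * (M + l + 1).factorial)) ≤ (M : ℝ) / (M + 2) ∧
    ((M.factorial : ℝ) * (M + 1).factorial /
        ((M - l).factorial * (M + l + 1).factorial)) < 1 := by
  have key : ((M.factorial : ℝ) * (M + 1).factorial /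
        ((M - l).factorial * (M + l + 1).factorial)) ≤ (M : ℝ) / (M + 2) := by
    rw [div_le_div_iff₀ (by positivity) (by positivity)]
    exact_mod_cast lambda_aux M l h1 h2
  refine ⟨key, key.trans_lt ?_⟩
  rw [div_lt_one (by positivity)]
  linarith
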